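/- Let 𝒮₂ be the space of Schwartz–Bruhat functions on ℤ×𝕋×ℝ², fix a sign ε ∈ {+1,−1}, and let ψ₁, ψ₂ ∈ 𝒮₂. Define φ₁, φ₂ : ℤ×𝕋×ℝ² → ℂ by φ₁(k,[x],r,s) := ((r+is)·ψ₂(k,[x],r,s) − ε·i·ψ₁(k,[x],r,s))/(1+s²+r²) and φ₂(k,[x],r,s) := ((r−is)·ψ₁(k,[x],r,s) − ε·i·ψ₂(k,[x],r,s))/(1+s²+r²). Then φ₁, φ₂ ∈ 𝒮₂, and for all (k,[x],r,s): (r+is)·φ₂(k,[x],r,s) + ε·i·φ₁(k,[x],r,s) = ψ₁(k,[x],r,s) and (r−is)·φ₁(k,[x],r,s) + ε·i·φ₂(k,[x],r,s) = ψ₂(k,[x],r,s). In other words, the operator matrix d_𝓡 ± i, where d_𝓡 = [[0, M₁+iM₂],[M₁−iM₂, 0]] acts by multiplication by the first and second real variables, maps 𝒮₂⊕𝒮₂ onto 𝒮₂⊕𝒮₂. -/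

import Mathlib

noncomputable section

open MeasureTheory

/-- The circle ℝ/ℤ. -/
abbrev Torus : Type := AddCircle (1 : ℝ)

/-- Partial derivative in the first real variable. -/
noncomputable def pdr (f : ℝ → ℝ → ℂ) : ℝ → ℝ → ℂ :=
  fun r s => deriv (fun u => f u s) r

/-- Partial derivative in the second real variable. -/
noncomputable def pds (f : ℝ → ℝ → ℂ) : ℝ → ℝ → ℂ :=
  fun r s => deriv (fun u => f r u) s

/-- Iterated mixed partial derivative ∂^α in the two real variables. -/
noncomputable def pdMulti (α : ℕ × ℕ) (f : ℝ → ℝ → ℂ) : ℝ → ℝ → ℂ :=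
  pdr^[α.1] (pds^[α.2] f)

/-- The Schwartz–Bruhat condition for a function F : ℤ×𝕋×ℝ² → ℂ: F is
continuous, smooth in the two real variables, and all seminorms
‖F‖_{N,α} = sup (|k|^N + |r|^N + |s|^N + 1)·|∂^α_{(r,s)}F| are finite. -/
def IsSchwartzBruhat (F : ℤ → Torus → ℝ → ℝ → ℂ) : Prop :=
  (∀ k : ℤ, Continuous fun p : Torus × ℝ × ℝ => F k p.1 p.2.1 p.2.2) ∧
  (∀ (k : ℤ) (v : Torus), ContDiff ℝ (⊤ : ℕ∞) fun p : ℝ × ℝ => F k v p.1 p.2) ∧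
  (∀ (N : ℕ) (α : ℕ × ℕ), ∃ C : ℝ, ∀ (k : ℤ) (v : Torus) (r s : ℝ),
    (|(k : ℝ)| ^ N + |r| ^ N + |s| ^ N + 1) * ‖pdMulti α (F k v) r s‖ ≤ C)

/-- The seminorm ‖F‖_{N,α} of a Schwartz–Bruhat function. -/
noncomputable def SBseminorm (F : ℤ → Torus → ℝ → ℝ → ℂ) (N : ℕ) (α : ℕ × ℕ) : ℝ :=
  ⨆ p : ℤ × Torus × ℝ × ℝ,
    (|(p.1 : ℝ)| ^ N + |p.2.2.1| ^ N + |p.2.2.2| ^ N + 1) *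
      ‖pdMulti α (F p.1 p.2.1) p.2.2.1 p.2.2.2‖

/-- The map Ξ: (ΞF)(k,[x],r,s) = ∫ F(k, [x−kθ], b(r+s+k), t)·e^{−2πits} dt. -/
noncomputable def Xi (θ : ℝ) (b : ℤ) (F : ℤ → Torus → ℝ → ℝ → ℂ) :
    ℤ → Torus → ℝ → ℝ → ℂ :=
  fun k v r s => ∫ t : ℝ,
    F k (v - (((k : ℝ) * θ : ℝ) : Torus)) ((b : ℝ) * (r + s + (k : ℝ))) t *
      Complex.exp (((-(2 * Real.pi * t * s) : ℝ) : ℂ) * Complex.I)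

/-- The map Ξ': (Ξ'F)(k,[x],r,s) = ∫ F(k, [x+kθ], r/b − q − k, q)·e^{2πiqs} dq. -/
noncomputable def Xi' (θ : ℝ) (b : ℤ) (F : ℤ → Torus → ℝ → ℝ → ℂ) :
    ℤ → Torus → ℝ → ℝ → ℂ :=
  fun k v r s => ∫ q : ℝ,
    F k (v + (((k : ℝ) * θ : ℝ) : Torus)) (r / (b : ℝ) - q - (k : ℝ)) q *
      Complex.exp (((2 * Real.pi * q * s : ℝ) : ℂ) * Complex.I)



/-- Joint smoothness of a function of two real variables. -/
def Smo (f : ℝ → ℝ → ℂ) : Prop := ContDiff ℝ (⊤ : ℕ∞) fun p : ℝ × ℝ => f p.1 p.2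

lemma Smo.dr {f : ℝ → ℝ → ℂ} (h : Smo f) (r s : ℝ) :
    DifferentiableAt ℝ (fun u => f u s) r := by
  have h1 : Differentiable ℝ fun p : ℝ × ℝ => f p.1 p.2 := ContDiff.differentiable h (by simp)
  exact (h1 (r, s)).comp (f := fun u : ℝ => (u, s)) r (by fun_prop)

lemma Smo.ds {f : ℝ → ℝ → ℂ} (h : Smo f) (r s : ℝ) :
    DifferentiableAt ℝ (fun u => f r u) s := by
  have h1 : Differentiable ℝ fun p : ℝ × ℝ => f p.1 p.2 := ContDiff.differentiable h (by simp)
  exact (h1 (r, s)).comp (f := fun u : ℝ => (r, u)) s (by fun_prop)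

lemma Smo.pdr {f : ℝ → ℝ → ℂ} (h : Smo f) : Smo (pdr f) := by
  have h1 : Differentiable ℝ fun p : ℝ × ℝ => f p.1 p.2 := ContDiff.differentiable h (by simp)
  have e : (fun p : ℝ × ℝ => _root_.pdr f p.1 p.2)
      = fun p : ℝ × ℝ => fderiv ℝ (fun p : ℝ × ℝ => f p.1 p.2) p ((1 : ℝ), (0 : ℝ)) := by
    funext p
    have h2 : HasDerivAt (fun u : ℝ => (u, p.2)) ((1 : ℝ), (0 : ℝ)) p.1 :=
      (hasDerivAt_id p.1).prodMk (hasDerivAt_const p.1 p.2)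
    exact ((h1 p).hasFDerivAt.comp_hasDerivAt (f := fun u : ℝ => (u, p.2)) p.1 h2).deriv
  unfold Smo
  rw [e]
  exact (ContDiff.fderiv_right (m := ((⊤ : ℕ∞) : WithTop ℕ∞)) h (by simp)).clm_apply contDiff_const

lemma Smo.pds {f : ℝ → ℝ → ℂ} (h : Smo f) : Smo (pds f) := by
  have h1 : Differentiable ℝ fun p : ℝ × ℝ => f p.1 p.2 := ContDiff.differentiable h (by simp)
  have e : (fun p : ℝ × ℝ => _root_.pds f p.1 p.2)
      = fun p : ℝ × ℝ => fderiv ℝ (fun p : ℝ × ℝ => f p.1 p.2) p ((0 : ℝ), (1 : ℝ)) := by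
    funext p
    have h2 : HasDerivAt (fun u : ℝ => (p.1, u)) ((0 : ℝ), (1 : ℝ)) p.2 :=
      (hasDerivAt_const p.2 p.1).prodMk (hasDerivAt_id p.2)
    exact ((h1 p).hasFDerivAt.comp_hasDerivAt (f := fun u : ℝ => (p.1, u)) p.2 h2).deriv
  unfold Smo
  rw [e]
  exact (ContDiff.fderiv_right (m := ((⊤ : ℕ∞) : WithTop ℕ∞)) h (by simp)).clm_apply contDiff_const

lemma Smo.add {f g : ℝ → ℝ → ℂ} (hf : Smo f) (hg : Smo g) :
    Smo (fun r s => f r s + g r s) := ContDiff.add hf hg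

lemma Smo.mul {f g : ℝ → ℝ → ℂ} (hf : Smo f) (hg : Smo g) :
    Smo (fun r s => f r s * g r s) := ContDiff.mul hf hg

lemma pdr_add {f g : ℝ → ℝ → ℂ} (hf : Smo f) (hg : Smo g) :
    pdr (fun r s => f r s + g r s) = fun r s => pdr f r s + pdr g r s := by
  funext r s
  exact deriv_fun_add (hf.dr r s) (hg.dr r s)

lemma pds_add {f g : ℝ → ℝ → ℂ} (hf : Smo f) (hg : Smo g) :
    pds (fun r s => f r s + g r s) = fun r s => pds f r s + pds g r s := by
  funext r s
  exact deriv_fun_add (hf.ds r s) (hg.ds r s)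

lemma pdr_mul {f g : ℝ → ℝ → ℂ} (hf : Smo f) (hg : Smo g) :
    pdr (fun r s => f r s * g r s) = fun r s => pdr f r s * g r s + f r s * pdr g r s := by
  funext r s
  exact deriv_fun_mul (hf.dr r s) (hg.dr r s)

lemma pds_mul {f g : ℝ → ℝ → ℂ} (hf : Smo f) (hg : Smo g) :
    pds (fun r s => f r s * g r s) = fun r s => pds f r s * g r s + f r s * pds g r s := by
  funext r s
  exact deriv_fun_mul (hf.ds r s) (hg.ds r s)

/-- The weight `1/(1+s²+r²)`. -/
def wgt (r s : ℝ) : ℂ := ((1 : ℂ) + (s : ℂ) ^ 2 + (r : ℂ) ^ 2)⁻¹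

lemma den_ne (r s : ℝ) : (1 : ℂ) + (s : ℂ) ^ 2 + (r : ℂ) ^ 2 ≠ 0 := by
  have : (1 : ℝ) + s ^ 2 + r ^ 2 ≠ 0 := by positivity
  exact_mod_cast this

lemma wgt_norm (r s : ℝ) : ‖wgt r s‖ ≤ 1 := by
  have e : (1 : ℂ) + (s : ℂ) ^ 2 + (r : ℂ) ^ 2 = ((1 + s ^ 2 + r ^ 2 : ℝ) : ℂ) := by
    push_cast; rfl
  unfold wgt
  rw [e, norm_inv, Complex.norm_real, Real.norm_of_nonneg (by positivity)]
  exact inv_le_one_of_one_le₀ (by nlinarith [sq_nonneg r, sq_nonneg s])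

lemma smo_fst : Smo (fun r _ => (r : ℂ)) := by
  unfold Smo
  exact Complex.ofRealCLM.contDiff.comp contDiff_fst

lemma smo_snd : Smo (fun _ s => (s : ℂ)) := by
  unfold Smo
  exact Complex.ofRealCLM.contDiff.comp contDiff_snd

lemma smo_const (c : ℂ) : Smo (fun _ _ => c) := contDiff_const

lemma smo_wgt : Smo wgt := by
  have h1 : ContDiff ℝ (⊤ : ℕ∞) fun p : ℝ × ℝ => (p.1 : ℂ) := smo_fst
  have h2 : ContDiff ℝ (⊤ : ℕ∞) fun p : ℝ × ℝ => (p.2 : ℂ) := smo_snd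
  unfold Smo wgt
  exact ContDiff.inv ((contDiff_const.add (h2.pow 2)).add (h1.pow 2)) fun p => den_ne p.1 p.2

/-- The algebra of multipliers. -/
inductive Mult : (ℝ → ℝ → ℂ) → Prop
  | const (c : ℂ) : Mult (fun _ _ => c)
  | fst : Mult (fun r _ => (r : ℂ))
  | snd : Mult (fun _ s => (s : ℂ))
  | wgt : Mult wgt
  | add {f g} : Mult f → Mult g → Mult (fun r s => f r s + g r s)
  | mul {f g} : Mult f → Mult g → Mult (fun r s => f r s * g r s)

lemma Mult.smo {m : ℝ → ℝ → ℂ} (h : Mult m) : Smo m := by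
  induction h with
  | const c => exact smo_const c
  | fst => exact smo_fst
  | snd => exact smo_snd
  | wgt => exact smo_wgt
  | add _ _ h1 h2 => exact h1.add h2
  | mul _ _ h1 h2 => exact h1.mul h2

lemma hasDerivAt_real (r : ℝ) : HasDerivAt (fun u : ℝ => (u : ℂ)) 1 r :=
  Complex.ofRealCLM.hasDerivAt

lemma pdr_wgt : pdr wgt = fun (r s : ℝ) => (-2 : ℂ) * ((r : ℂ) * (wgt r s * wgt r s)) := by
  funext r s
  have h := (((hasDerivAt_real r).pow 2).const_add ((1 : ℂ) + (s : ℂ) ^ 2)).fun_inv (den_ne r s)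
  refine h.deriv.trans ?_
  have := den_ne r s
  simp only [wgt, Pi.pow_apply]
  field_simp
  simp [mul_comm]

lemma pds_wgt : pds wgt = fun (r s : ℝ) => (-2 : ℂ) * ((s : ℂ) * (wgt r s * wgt r s)) := by
  funext r s
  have h := ((((hasDerivAt_real s).pow 2).const_add (1 : ℂ)).add_const ((r : ℂ) ^ 2)).fun_inv
    (den_ne r s)
  refine h.deriv.trans ?_
  have := den_ne r s
  simp only [wgt, Pi.pow_apply]
  field_simp
  simp [mul_comm]

lemma Mult.pdr {m : ℝ → ℝ → ℂ} (h : Mult m) : Mult (pdr m) := by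
  induction h with
  | const c =>
    have : _root_.pdr (fun _ _ => c) = fun _ _ => 0 := by funext r s; simp [_root_.pdr]
    rw [this]; exact .const 0
  | fst =>
    have : _root_.pdr (fun r _ => (r : ℂ)) = fun _ _ => 1 := by
      funext r s; exact (hasDerivAt_real r).deriv
    rw [this]; exact .const 1
  | snd =>
    have : _root_.pdr (fun _ s => (s : ℂ)) = fun _ _ => 0 := by funext r s; simp [_root_.pdr]
    rw [this]; exact .const 0
  | wgt => rw [pdr_wgt]; exact .mul (.const _) (.mul .fst (.mul .wgt .wgt))
  | add a b h1 h2 => rw [pdr_add a.smo b.smo]; exact h1.add h2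
  | mul a b h1 h2 => rw [pdr_mul a.smo b.smo]; exact (h1.mul b).add (a.mul h2)

lemma Mult.pds {m : ℝ → ℝ → ℂ} (h : Mult m) : Mult (pds m) := by
  induction h with
  | const c =>
    have : _root_.pds (fun _ _ => c) = fun _ _ => 0 := by funext r s; simp [_root_.pds]
    rw [this]; exact .const 0
  | snd =>
    have : _root_.pds (fun _ s => (s : ℂ)) = fun _ _ => 1 := by
      funext r s; exact (hasDerivAt_real s).deriv
    rw [this]; exact .const 1
  | fst =>
    have : _root_.pds (fun r _ => (r : ℂ)) = fun _ _ => 0 := by funext r s; simp [_root_.pds]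
    rw [this]; exact .const 0
  | wgt => rw [pds_wgt]; exact .mul (.const _) (.mul .snd (.mul .wgt .wgt))
  | add a b h1 h2 => rw [pds_add a.smo b.smo]; exact h1.add h2
  | mul a b h1 h2 => rw [pds_mul a.smo b.smo]; exact (h1.mul b).add (a.mul h2)

/-- Rapid decay of a family. -/
def Dec (F : ℤ → Torus → ℝ → ℝ → ℂ) : Prop :=
  ∀ N : ℕ, ∃ C : ℝ, ∀ (k : ℤ) (v : Torus) (r s : ℝ),
    (|(k : ℝ)| ^ N + |r| ^ N + |s| ^ N + 1) * ‖F k v r s‖ ≤ C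

lemma Dec.add {F G : ℤ → Torus → ℝ → ℝ → ℂ} (hF : Dec F) (hG : Dec G) :
    Dec (fun k v r s => F k v r s + G k v r s) := by
  intro N
  obtain ⟨C, hC⟩ := hF N
  obtain ⟨D, hD⟩ := hG N
  refine ⟨C + D, fun k v r s => ?_⟩
  calc _ ≤ (|(k : ℝ)| ^ N + |r| ^ N + |s| ^ N + 1) * (‖F k v r s‖ + ‖G k v r s‖) := by
        gcongr; exact norm_add_le _ _
    _ ≤ C + D := by rw [mul_add]; exact add_le_add (hC k v r s) (hD k v r s)

lemma mul_pow_le {x y : ℝ} (hx : 0 ≤ x) (hy : 0 ≤ y) (N : ℕ) :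
    x * y ^ N ≤ x ^ (N + 1) + y ^ (N + 1) := by
  rcases le_total x y with h | h
  · calc x * y ^ N ≤ y * y ^ N := by gcongr
      _ = y ^ (N + 1) := by ring
      _ ≤ _ := le_add_of_nonneg_left (by positivity)
  · calc x * y ^ N ≤ x * x ^ N := by gcongr
      _ = x ^ (N + 1) := by ring
      _ ≤ _ := le_add_of_nonneg_right (by positivity)

lemma weight_le {x a b c : ℝ} (hx : 0 ≤ x) (ha : 0 ≤ a) (hb : 0 ≤ b) (hc : 0 ≤ c)
    (hxbc : x = b ∨ x = c) (N : ℕ) :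
    (a ^ N + b ^ N + c ^ N + 1) * x
      ≤ 5 * (a ^ (N + 1) + b ^ (N + 1) + c ^ (N + 1) + 1) := by
  have h1 := mul_pow_le hx ha N
  have h2 := mul_pow_le hx hb N
  have h3 := mul_pow_le hx hc N
  have h4 := mul_pow_le hx zero_le_one N
  simp only [one_pow] at h4
  have p1 : 0 ≤ a ^ (N + 1) := by positivity
  have p2 : 0 ≤ b ^ (N + 1) := by positivity
  have p3 : 0 ≤ c ^ (N + 1) := by positivity
  have h5 : x ^ (N + 1) ≤ b ^ (N + 1) + c ^ (N + 1) := by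
    rcases hxbc with h | h <;> rw [h] <;> linarith
  rcases hxbc with h | h <;> subst h <;> nlinarith

lemma Mult.dec {m : ℝ → ℝ → ℂ} (h : Mult m) :
    ∀ {F : ℤ → Torus → ℝ → ℝ → ℂ}, Dec F → Dec (fun k v r s => m r s * F k v r s) := by
  induction h with
  | const c =>
    intro F hF N
    obtain ⟨C, hC⟩ := hF N
    refine ⟨‖c‖ * C, fun k v r s => ?_⟩
    rw [norm_mul, mul_left_comm]
    exact mul_le_mul_of_nonneg_left (hC k v r s) (norm_nonneg c)
  | fst =>
    intro F hF N
    obtain ⟨C, hC⟩ := hF (N + 1)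
    refine ⟨5 * C, fun k v r s => ?_⟩
    rw [norm_mul, Complex.norm_real, Real.norm_eq_abs, ← mul_assoc]
    refine (mul_le_mul_of_nonneg_right (weight_le (abs_nonneg r) (abs_nonneg (k : ℝ))
      (abs_nonneg r) (abs_nonneg s) (Or.inl rfl) N) (norm_nonneg _)).trans ?_
    rw [mul_assoc]
    exact mul_le_mul_of_nonneg_left (hC k v r s) (by norm_num)
  | snd =>
    intro F hF N
    obtain ⟨C, hC⟩ := hF (N + 1)
    refine ⟨5 * C, fun k v r s => ?_⟩
    rw [norm_mul, Complex.norm_real, Real.norm_eq_abs, ← mul_assoc]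
    refine (mul_le_mul_of_nonneg_right (weight_le (abs_nonneg s) (abs_nonneg (k : ℝ))
      (abs_nonneg r) (abs_nonneg s) (Or.inr rfl) N) (norm_nonneg _)).trans ?_
    rw [mul_assoc]
    exact mul_le_mul_of_nonneg_left (hC k v r s) (by norm_num)
  | wgt =>
    intro F hF N
    obtain ⟨C, hC⟩ := hF N
    refine ⟨C, fun k v r s => le_trans ?_ (hC k v r s)⟩
    rw [norm_mul]
    gcongr
    exact mul_le_of_le_one_left (norm_nonneg _) (wgt_norm r s)
  | add _ _ h1 h2 =>
    intro F hF
    simp only [add_mul]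
    exact (h1 hF).add (h2 hF)
  | mul _ _ h1 h2 =>
    intro F hF
    simp only [mul_assoc]
    exact h1 (h2 hF)

/-- Smooth families all of whose `r`-derivatives decay. -/
def RDec (F : ℤ → Torus → ℝ → ℝ → ℂ) : Prop :=
  (∀ k v, Smo (F k v)) ∧ ∀ a : ℕ, Dec (fun k v => pdr^[a] (F k v))

lemma RDec.pdr {F : ℤ → Torus → ℝ → ℝ → ℂ} (h : RDec F) : RDec (fun k v => pdr (F k v)) :=
  ⟨fun k v => (h.1 k v).pdr, fun a => by simpa only [Function.iterate_succ_apply] using h.2 (a + 1)⟩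

lemma pdr_iter_add (a : ℕ) : ∀ {f g : ℝ → ℝ → ℂ}, Smo f → Smo g →
    pdr^[a] (fun r s => f r s + g r s) = fun r s => pdr^[a] f r s + pdr^[a] g r s := by
  induction a with
  | zero => intros; rfl
  | succ a ih =>
    intro f g hf hg
    simp only [Function.iterate_succ_apply]
    rw [pdr_add hf hg, ih hf.pdr hg.pdr]

lemma pds_iter_add (a : ℕ) : ∀ {f g : ℝ → ℝ → ℂ}, Smo f → Smo g →
    pds^[a] (fun r s => f r s + g r s) = fun r s => pds^[a] f r s + pds^[a] g r s := by
  induction a with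
  | zero => intros; rfl
  | succ a ih =>
    intro f g hf hg
    simp only [Function.iterate_succ_apply]
    rw [pds_add hf hg, ih hf.pds hg.pds]

lemma RDec.add {F G : ℤ → Torus → ℝ → ℝ → ℂ} (hF : RDec F) (hG : RDec G) :
    RDec (fun k v r s => F k v r s + G k v r s) := by
  refine ⟨fun k v => (hF.1 k v).add (hG.1 k v), fun a => ?_⟩
  have : (fun k v => _root_.pdr^[a] (fun r s => F k v r s + G k v r s))
      = fun k v r s => _root_.pdr^[a] (F k v) r s + _root_.pdr^[a] (G k v) r s := by
    funext k v
    exact pdr_iter_add a (hF.1 k v) (hG.1 k v)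
  rw [this]
  exact (hF.2 a).add (hG.2 a)

lemma RDec.mul {m : ℝ → ℝ → ℂ} {F : ℤ → Torus → ℝ → ℝ → ℂ} (hm : Mult m) (hF : RDec F) :
    RDec (fun k v r s => m r s * F k v r s) := by
  refine ⟨fun k v => hm.smo.mul (hF.1 k v), fun a => ?_⟩
  induction a generalizing m F with
  | zero => exact hm.dec (hF.2 0)
  | succ a ih =>
    have e : (fun k v => _root_.pdr^[a + 1] (fun r s => m r s * F k v r s))
        = fun k v r s => _root_.pdr^[a] (fun r s => _root_.pdr m r s * F k v r s) r s
          + _root_.pdr^[a] (fun r s => m r s * _root_.pdr (F k v) r s) r s := by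
      funext k v
      rw [Function.iterate_succ_apply, pdr_mul hm.smo (hF.1 k v)]
      exact pdr_iter_add a (hm.pdr.smo.mul (hF.1 k v)) (hm.smo.mul (hF.1 k v).pdr)
    rw [e]
    exact (ih hm.pdr hF).add (ih hm hF.pdr)

/-- Smooth families all of whose derivatives decay. -/
def SDec (F : ℤ → Torus → ℝ → ℝ → ℂ) : Prop :=
  (∀ k v, Smo (F k v)) ∧ ∀ b : ℕ, RDec (fun k v => pds^[b] (F k v))

lemma SDec.pds {F : ℤ → Torus → ℝ → ℝ → ℂ} (h : SDec F) : SDec (fun k v => pds (F k v)) :=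
  ⟨fun k v => (h.1 k v).pds, fun a => by simpa only [Function.iterate_succ_apply] using h.2 (a + 1)⟩

lemma SDec.add {F G : ℤ → Torus → ℝ → ℝ → ℂ} (hF : SDec F) (hG : SDec G) :
    SDec (fun k v r s => F k v r s + G k v r s) := by
  refine ⟨fun k v => (hF.1 k v).add (hG.1 k v), fun a => ?_⟩
  have : (fun k v => _root_.pds^[a] (fun r s => F k v r s + G k v r s))
      = fun k v r s => _root_.pds^[a] (F k v) r s + _root_.pds^[a] (G k v) r s := by
    funext k v
    exact pds_iter_add a (hF.1 k v) (hG.1 k v)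
  rw [this]
  exact (hF.2 a).add (hG.2 a)

lemma SDec.mul {m : ℝ → ℝ → ℂ} {F : ℤ → Torus → ℝ → ℝ → ℂ} (hm : Mult m) (hF : SDec F) :
    SDec (fun k v r s => m r s * F k v r s) := by
  refine ⟨fun k v => hm.smo.mul (hF.1 k v), fun a => ?_⟩
  induction a generalizing m F with
  | zero => exact RDec.mul hm (hF.2 0)
  | succ a ih =>
    have e : (fun k v => _root_.pds^[a + 1] (fun r s => m r s * F k v r s))
        = fun k v r s => _root_.pds^[a] (fun r s => _root_.pds m r s * F k v r s) r s
          + _root_.pds^[a] (fun r s => m r s * _root_.pds (F k v) r s) r s := by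
      funext k v
      rw [Function.iterate_succ_apply, pds_mul hm.smo (hF.1 k v)]
      exact pds_iter_add a (hm.pds.smo.mul (hF.1 k v)) (hm.smo.mul (hF.1 k v).pds)
    rw [e]
    exact (ih hm.pds hF).add (ih hm hF.pds)

lemma Smo.pds_iter {f : ℝ → ℝ → ℂ} (h : Smo f) (b : ℕ) : Smo (_root_.pds^[b] f) := by
  induction b generalizing f with
  | zero => exact h
  | succ b ih => rw [Function.iterate_succ_apply]; exact ih h.pds

lemma IsSchwartzBruhat.sdec {F : ℤ → Torus → ℝ → ℝ → ℂ} (h : IsSchwartzBruhat F) : SDec F :=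
  ⟨h.2.1, fun b => ⟨fun k v => Smo.pds_iter (h.2.1 k v) b, fun a N => h.2.2 N (a, b)⟩⟩

lemma IsSchwartzBruhat.comb {F G : ℤ → Torus → ℝ → ℝ → ℂ} (hF : IsSchwartzBruhat F)
    (hG : IsSchwartzBruhat G) {m n : ℝ → ℝ → ℂ} (hm : Mult m) (hn : Mult n) :
    IsSchwartzBruhat (fun k v r s => m r s * F k v r s + n r s * G k v r s) := by
  have h := (SDec.mul hm hF.sdec).add (SDec.mul hn hG.sdec)
  refine ⟨fun k => ?_, h.1, fun N α => (h.2 α.2).2 α.1 N⟩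
  have c1 : Continuous fun p : ℝ × ℝ => m p.1 p.2 := ContDiff.continuous hm.smo
  have c2 : Continuous fun p : ℝ × ℝ => n p.1 p.2 := ContDiff.continuous hn.smo
  exact ((c1.comp continuous_snd).mul (hF.1 k)).add ((c2.comp continuous_snd).mul (hG.1 k))

/-!
STATEMENT 15: Surjectivity of d_𝓡 ± i on 𝒮₂⊕𝒮₂: for ψ₁, ψ₂ ∈ 𝒮₂ the explicit
functions φ₁, φ₂ lie in 𝒮₂ and satisfy (r+is)φ₂ + εiφ₁ = ψ₁ and
(r−is)φ₁ + εiφ₂ = ψ₂.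
-/

theorem stmt15 (ε : ℝ) (hε : ε = 1 ∨ ε = -1)
    (ψ₁ ψ₂ : ℤ → Torus → ℝ → ℝ → ℂ)
    (hψ₁ : IsSchwartzBruhat ψ₁) (hψ₂ : IsSchwartzBruhat ψ₂)
    (φ₁ φ₂ : ℤ → Torus → ℝ → ℝ → ℂ)
    (hφ₁ : φ₁ = fun k x (r : ℝ) (s : ℝ) =>
      (((r : ℂ) + Complex.I * (s : ℂ)) * ψ₂ k x r s
          - (ε : ℂ) * Complex.I * ψ₁ k x r s) /
        ((1 : ℂ) + (s : ℂ) ^ 2 + (r : ℂ) ^ 2))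
    (hφ₂ : φ₂ = fun k x (r : ℝ) (s : ℝ) =>
      (((r : ℂ) - Complex.I * (s : ℂ)) * ψ₁ k x r s
          - (ε : ℂ) * Complex.I * ψ₂ k x r s) /
        ((1 : ℂ) + (s : ℂ) ^ 2 + (r : ℂ) ^ 2)) :
    -- φ₁, φ₂ are Schwartz–Bruhat
    IsSchwartzBruhat φ₁ ∧ IsSchwartzBruhat φ₂ ∧
    -- (d_𝓡 + εi)(φ₁,φ₂) = (ψ₁,ψ₂)
    (∀ (k : ℤ) (x : Torus) (r s : ℝ),
      ((r : ℂ) + Complex.I * (s : ℂ)) * φ₂ k x r s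
          + (ε : ℂ) * Complex.I * φ₁ k x r s = ψ₁ k x r s) ∧
    (∀ (k : ℤ) (x : Torus) (r s : ℝ),
      ((r : ℂ) - Complex.I * (s : ℂ)) * φ₁ k x r s
          + (ε : ℂ) * Complex.I * φ₂ k x r s = ψ₂ k x r s) := by
  have hε2 : (ε : ℂ) ^ 2 = 1 := by rcases hε with h | h <;> simp [h]
  have hI := Complex.I_sq
  refine ⟨?_, ?_, ?_, ?_⟩
  · have h := hψ₂.comb hψ₁
      (Mult.mul (Mult.add .fst (.mul (.const Complex.I) .snd)) .wgt)
      (Mult.mul (.const (-((ε : ℂ) * Complex.I))) .wgt)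
    convert h using 1
    rw [hφ₁]
    funext k x r s
    simp only [wgt, div_eq_mul_inv]
    ring
  · have h := hψ₁.comb hψ₂
      (Mult.mul (Mult.add .fst (.mul (.const (-Complex.I)) .snd)) .wgt)
      (Mult.mul (.const (-((ε : ℂ) * Complex.I))) .wgt)
    convert h using 1
    rw [hφ₂]
    funext k x r s
    simp only [wgt, div_eq_mul_inv]
    ring
  · intro k x r s
    have := den_ne r s
    simp only [hφ₁, hφ₂]
    field_simp
    linear_combination (-(s : ℂ) ^ 2 * ψ₁ k x r s - (ε : ℂ) ^ 2 * ψ₁ k x r s) * hI + ψ₁ k x r s * hε2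
  · intro k x r s
    have := den_ne r s
    simp only [hφ₁, hφ₂]
    field_simp
    linear_combination (-(s : ℂ) ^ 2 * ψ₂ k x r s - (ε : ℂ) ^ 2 * ψ₂ k x r s) * hI + ψ₂ k x r s * hε2

end
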